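/- Let n ≥ 1, let Γ : ℝ → M_n(ℝ) satisfy Γ(t)ᵀ = −Γ(t) for all t, let U : ℝ → M_n(ℝ) be differentiable with U'(t) = −Γ(t)U(t) and U(t)ᵀU(t) = 1 (the identity matrix) for all t, let S ∈ M_n(ℝ) be a constant matrix with Sᵀ = S, and let W : ℝ × ℝⁿ → ℝ be twice continuously differentiable in the space variables such that for all (t,y) the matrix S·HessW(t,y) is symmetric, where (HessW)_{ab} = ∂²W/∂y^a∂y^b. Define g(t) = U(t)·S·U(t)ᵀ and V(t,x) = W(t, U(t)ᵀx) + (1/2)⟨x, Γ(t)²x⟩. Then for all (t,x) ∈ ℝ × ℝⁿ, the matrix g(t)·(HessV(t,x) − Γ(t)²) is symmetric, where (HessV)_{ab} = ∂²V/∂x^a∂x^b. -/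

import Mathlib

open Matrix

/-- The Hessian in the space variables of a function `f : ℝ × ℝⁿ → ℝ`. -/
noncomputable def spaceHess (n : ℕ) (f : ℝ × (Fin n → ℝ) → ℝ) (t : ℝ)
    (x : Fin n → ℝ) : Matrix (Fin n) (Fin n) ℝ :=
  Matrix.of fun a b =>
    fderiv ℝ (fun x' : Fin n → ℝ =>
      fderiv ℝ (fun x'' : Fin n → ℝ => f (t, x'')) x' (Pi.single b 1)) x
      (Pi.single a 1)

/-!
Because `x ↦ Uᵀx` is linear and `Γ²` is symmetric, the chain rule gives
`Hess V = U (Hess W) Uᵀ + Γ²`, the Hessian of `W` being taken at `Uᵀx`. The quadratic term thus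
drops out of `g (Hess V - Γ²)`, and `UᵀU = 1` collapses what is left to `U (S Hess W) Uᵀ`, a
congruence transform of the symmetric matrix `S Hess W`.
-/

open scoped Topology

section SecondDerivative

variable {𝕜 E F G : Type*} [NontriviallyNormedField 𝕜]
  [NormedAddCommGroup E] [NormedSpace 𝕜 E] [NormedAddCommGroup F] [NormedSpace 𝕜 F]
  [NormedAddCommGroup G] [NormedSpace 𝕜 G]

/-- `f` has second Fréchet derivative `f''` at `x`: it is differentiable near `x`, and its
derivative is differentiable at `x` with derivative `f''`. -/
def HasSecondFDerivAt (f : E → F) (f'' : E →L[𝕜] E →L[𝕜] F) (x : E) : Prop :=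
  ∃ f' : E → E →L[𝕜] F, (∀ᶠ y in 𝓝 x, HasFDerivAt f (f' y) y) ∧ HasFDerivAt f' f'' x

theorem hasSecondFDerivAt_of_contDiffAt {f : E → F} {x : E} (hf : ContDiffAt 𝕜 2 f x) :
    HasSecondFDerivAt f (fderiv 𝕜 (fderiv 𝕜 f) x) x := by
  refine ⟨fderiv 𝕜 f, ?_, ?_⟩
  · filter_upwards [hf.eventually (by simp)] with y hy
    exact (hy.differentiableAt two_ne_zero).hasFDerivAt
  · exact ((hf.fderiv_right (m := 1) (by norm_num)).differentiableAt one_ne_zero).hasFDerivAt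

namespace HasSecondFDerivAt

theorem add {f g : E → F} {f'' g'' : E →L[𝕜] E →L[𝕜] F} {x : E}
    (hf : HasSecondFDerivAt f f'' x) (hg : HasSecondFDerivAt g g'' x) :
    HasSecondFDerivAt (fun y => f y + g y) (f'' + g'') x := by
  obtain ⟨f', hf', hf''⟩ := hf
  obtain ⟨g', hg', hg''⟩ := hg
  exact ⟨fun y => f' y + g' y, (hf'.and hg').mono fun _ h => h.1.add h.2, hf''.add hg''⟩

theorem comp_continuousLinearMap {f : F → G} {f'' : F →L[𝕜] F →L[𝕜] G} (L : E →L[𝕜] F) {x : E}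
    (hf : HasSecondFDerivAt f f'' (L x)) :
    HasSecondFDerivAt (fun y => f (L y)) (f''.bilinearComp L L) x := by
  obtain ⟨f', hf', hf''⟩ := hf
  refine ⟨fun y => (f' (L y)).comp L, ?_, ?_⟩
  · filter_upwards [L.continuous.continuousAt.eventually hf'] with y hy
    exact hy.comp y L.hasFDerivAt
  · let precompL := (ContinuousLinearMap.compL 𝕜 E F G).flip L
    exact precompL.hasFDerivAt.comp x (hf''.comp x L.hasFDerivAt)

end HasSecondFDerivAt

theorem hasSecondFDerivAt_diagonal (B : E →L[𝕜] E →L[𝕜] F) (x : E) :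
    HasSecondFDerivAt (fun y => B y y) (B + B.flip) x := by
  refine ⟨B + B.flip, .of_forall fun y => ?_, (B + B.flip).hasFDerivAt⟩
  refine (B.hasFDerivAt_of_bilinear (hasFDerivAt_id y) (hasFDerivAt_id y)).congr_fderiv ?_
  ext v
  simp

end SecondDerivative

section Hessian

variable {𝕜 ι κ : Type*} [NontriviallyNormedField 𝕜] [Fintype ι] [DecidableEq ι] [Fintype κ]
  [DecidableEq κ]

/-- The Hessian matrix of a function of finitely many variables, with the iterated partial
derivatives taken in the same order as in `spaceHess`; entries whose derivatives do not exist
are junk values. -/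
noncomputable def hessianMatrix (f : (ι → 𝕜) → 𝕜) (x : ι → 𝕜) : Matrix ι ι 𝕜 :=
  Matrix.of fun a b => fderiv 𝕜 (fun y => fderiv 𝕜 f y (Pi.single b 1)) x (Pi.single a 1)

theorem spaceHess_eq_hessianMatrix (n : ℕ) (f : ℝ × (Fin n → ℝ) → ℝ) (t : ℝ) (x : Fin n → ℝ) :
    spaceHess n f t x = hessianMatrix (fun y => f (t, y)) x :=
  rfl

theorem HasSecondFDerivAt.hessianMatrix_eq {f : (ι → 𝕜) → 𝕜}
    {f'' : (ι → 𝕜) →L[𝕜] (ι → 𝕜) →L[𝕜] 𝕜} {x : ι → 𝕜} (hf : HasSecondFDerivAt f f'' x) :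
    hessianMatrix f x = LinearMap.toMatrix₂' 𝕜 f''.toLinearMap₁₂ := by
  obtain ⟨f', hf', hf''⟩ := hf
  ext a b
  have hpartial : (fun y => fderiv 𝕜 f y (Pi.single b 1)) =ᶠ[𝓝 x] fun y => f' y (Pi.single b 1) :=
    hf'.mono fun y hy => congrArg (· (Pi.single b 1)) hy.fderiv
  have hpartial' := hf''.clm_apply (hasFDerivAt_const (Pi.single b (1 : 𝕜)) x)
  simp [hessianMatrix, hpartial.fderiv_eq, hpartial'.fderiv]

variable [CompleteSpace 𝕜]

theorem hessianMatrix_comp_mulVec_add_quadratic {f : (κ → 𝕜) → 𝕜}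
    {f'' : (κ → 𝕜) →L[𝕜] (κ → 𝕜) →L[𝕜] 𝕜} (A : Matrix κ ι 𝕜) (G : Matrix ι ι 𝕜) {x : ι → 𝕜}
    (hf : HasSecondFDerivAt f f'' (A *ᵥ x)) :
    hessianMatrix (fun y => f (A *ᵥ y) + y ⬝ᵥ G *ᵥ y) x =
      Aᵀ * hessianMatrix f (A *ᵥ x) * A + (G + Gᵀ) := by
  let L : (ι → 𝕜) →L[𝕜] (κ → 𝕜) := (Matrix.toLin' A).toContinuousLinearMap
  let Q : (ι → 𝕜) →L[𝕜] (ι → 𝕜) →L[𝕜] 𝕜 := (Matrix.toLinearMap₂' 𝕜 G).toContinuousBilinearMap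
  have hQ (y z : ι → 𝕜) : Q y z = y ⬝ᵥ G *ᵥ z := Matrix.toLinearMap₂'_apply' G y z
  have hsum : HasSecondFDerivAt (fun y => f (A *ᵥ y) + y ⬝ᵥ G *ᵥ y)
      (f''.bilinearComp L L + (Q + Q.flip)) x := by
    simp only [← hQ]
    exact (hf.comp_continuousLinearMap L).add (hasSecondFDerivAt_diagonal Q x)
  have hpullback : LinearMap.toMatrix₂' 𝕜 (f''.bilinearComp L L).toLinearMap₁₂ =
      Aᵀ * LinearMap.toMatrix₂' 𝕜 f''.toLinearMap₁₂ * A := by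
    rw [← LinearMap.toMatrix'_toLin' A, ← LinearMap.toMatrix₂'_compl₁₂]
    rfl
  have hquadratic : LinearMap.toMatrix₂' 𝕜 (Q + Q.flip).toLinearMap₁₂ = G + Gᵀ := by
    ext a b
    simp [hQ]
  rw [hsum.hessianMatrix_eq, hf.hessianMatrix_eq, map_add, map_add, hpullback, hquadratic]

end Hessian

section Symmetry

variable {R ι κ : Type*} [Fintype ι]

theorem isSymm_sq_of_transpose_eq_neg [CommRing R] [DecidableEq ι] {A : Matrix ι ι R}
    (hA : Aᵀ = -A) : (A ^ 2).IsSymm := by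
  rw [Matrix.IsSymm, Matrix.transpose_pow, hA, neg_sq]

theorem isSymm_conj_mul_conj [CommSemiring R] [Fintype κ] [DecidableEq κ] {U : Matrix ι κ R}
    {S H : Matrix κ κ R} (hU : Uᵀ * U = 1) (hSH : (S * H).IsSymm) :
    (U * S * Uᵀ * (U * H * Uᵀ)).IsSymm := by
  have hconj : U * S * Uᵀ * (U * H * Uᵀ) = U * (S * H) * Uᵀ :=
    calc
      U * S * Uᵀ * (U * H * Uᵀ) = U * S * (Uᵀ * U) * H * Uᵀ := by simp only [Matrix.mul_assoc]
      _ = U * (S * H) * Uᵀ := by rw [hU, Matrix.mul_one, Matrix.mul_assoc U S H]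
  rw [hconj, Matrix.IsSymm, Matrix.transpose_mul, Matrix.transpose_mul, hSH.eq,
    Matrix.transpose_transpose, Matrix.mul_assoc U]

end Symmetry

theorem prop3_construction_general {𝕜 ι κ : Type*} [NontriviallyNormedField 𝕜] [CompleteSpace 𝕜]
    [NeZero (2 : 𝕜)] [Fintype ι] [DecidableEq ι] [Fintype κ] [DecidableEq κ]
    {U : Matrix ι κ 𝕜} (hU : Uᵀ * U = 1) {S : Matrix κ κ 𝕜} {G : Matrix ι ι 𝕜} (hG : G.IsSymm)
    {W : (κ → 𝕜) → 𝕜} {W'' : (κ → 𝕜) →L[𝕜] (κ → 𝕜) →L[𝕜] 𝕜} {x : ι → 𝕜}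
    (hW : HasSecondFDerivAt W W'' (Uᵀ *ᵥ x))
    (hSW : (S * hessianMatrix W (Uᵀ *ᵥ x)).IsSymm) :
    (U * S * Uᵀ *
      (hessianMatrix (fun y => W (Uᵀ *ᵥ y) + 1 / 2 * (y ⬝ᵥ G *ᵥ y)) x - G)).IsSymm := by
  have hhalf : (1 / 2 : 𝕜) • G + ((1 / 2 : 𝕜) • G)ᵀ = G := by
    rw [Matrix.transpose_smul, hG.eq, ← add_smul, add_halves, one_smul]
  have hHess : hessianMatrix (fun y => W (Uᵀ *ᵥ y) + 1 / 2 * (y ⬝ᵥ G *ᵥ y)) x =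
      U * hessianMatrix W (Uᵀ *ᵥ x) * Uᵀ + G := by
    simpa only [Matrix.smul_mulVec, dotProduct_smul, smul_eq_mul, hhalf,
      Matrix.transpose_transpose]
      using hessianMatrix_comp_mulVec_add_quadratic Uᵀ ((1 / 2 : 𝕜) • G) hW
  rw [hHess, add_sub_cancel_right]
  exact isSymm_conj_mul_conj hU hSW

/- STATEMENT 18: Proposition 3. If Γ(t) is skew, U solves U' = −ΓU and is
orthogonal, S is constant symmetric, W is C² in the space variables with
S·HessW symmetric, then g(t) = U S Uᵀ and V(t,x) = W(t,Uᵀx) + (1/2)⟨x,Γ²x⟩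
satisfy: g·(HessV − Γ²) is symmetric. -/
theorem prop3_construction
    (n : ℕ) (hn : 1 ≤ n)
    (Γ U : ℝ → Matrix (Fin n) (Fin n) ℝ)
    (hΓskew : ∀ t, (Γ t)ᵀ = -Γ t)
    (hU : ∀ (t : ℝ) (i j : Fin n),
      HasDerivAt (fun s => U s i j) ((-(Γ t * U t)) i j) t)
    (hUorth : ∀ t, (U t)ᵀ * U t = 1)
    (S : Matrix (Fin n) (Fin n) ℝ) (hS : Sᵀ = S)
    (W : ℝ × (Fin n → ℝ) → ℝ)
    (hW : ∀ t : ℝ, ContDiff ℝ 2 (fun y : Fin n → ℝ => W (t, y)))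
    (hSW : ∀ (t : ℝ) (y : Fin n → ℝ),
      (S * spaceHess n W t y)ᵀ = S * spaceHess n W t y)
    (g : ℝ → Matrix (Fin n) (Fin n) ℝ)
    (hg : ∀ t, g t = U t * S * (U t)ᵀ)
    (V : ℝ × (Fin n → ℝ) → ℝ)
    (hV : ∀ (t : ℝ) (x : Fin n → ℝ),
      V (t, x) = W (t, (U t)ᵀ.mulVec x) + (1/2) * (x ⬝ᵥ (Γ t ^ 2).mulVec x)) :
    ∀ (t : ℝ) (x : Fin n → ℝ),
      (g t * (spaceHess n V t x - Γ t ^ 2))ᵀ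
        = g t * (spaceHess n V t x - Γ t ^ 2) := by
  intro t x
  rw [hg t, spaceHess_eq_hessianMatrix, funext (hV t)]
  exact prop3_construction_general (W := fun y => W (t, y)) (hUorth t)
    (isSymm_sq_of_transpose_eq_neg (hΓskew t))
    (hasSecondFDerivAt_of_contDiffAt (hW t).contDiffAt) (hSW t _)
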